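/- (Uniqueness of Kantorovich potentials for Lipschitz costs.) Let X = ℝ^d, let μ be equivalent to Lebesgue measure on spt μ, with Lebesgue-null boundary ∂(spt μ) and connected interior Int(spt μ). Let Γ = spt π where π ∈ Π(μ,ν) is an optimal transport for the continuous cost c, and suppose c(·,y) is differentiable for every y ∈ Y and locally Lipschitz uniformly in y. Then for any c-convex functions ψ_1, ψ_2 on X with Γ ⊂ ∂_c ψ_i (i = 1,2), the difference ψ_1 − ψ_2 is constant on spt μ (in particular on proj_X Γ). -/

import Mathlib

open MeasureTheory Filter Topology Set
open scoped ENNReal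

noncomputable section

namespace EOT

variable {X Y : Type*}

/-- A coupling of `μ` and `ν`: a probability measure on the product with the given marginals. -/
def IsCoupling [MeasurableSpace X] [MeasurableSpace Y]
    (μ : Measure X) (ν : Measure Y) (π : Measure (X × Y)) : Prop :=
  IsProbabilityMeasure π ∧ π.map Prod.fst = μ ∧ π.map Prod.snd = ν

/-- `(c,ε)`-cyclical invariance: `π` is equivalent to `P = μ ⊗ ν`, with a positive version of the
density satisfying the cyclical identity for all `k` points. -/
def IsCyclInvariant [MeasurableSpace X] [MeasurableSpace Y]
    (c : X → Y → ℝ) (ε : ℝ) (μ : Measure X) (ν : Measure Y)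
    (π : Measure (X × Y)) : Prop :=
  IsCoupling μ ν π ∧
  ∃ D : X × Y → ℝ, Measurable D ∧ (∀ z, 0 < D z) ∧
    π = (μ.prod ν).withDensity (fun z => ENNReal.ofReal (D z)) ∧
    ∀ (k : ℕ) (x : Fin (k + 1) → X) (y : Fin (k + 1) → Y),
      (∏ i, D (x i, y i)) =
        Real.exp (-(1 / ε) * ((∑ i, c (x i) (y i)) - ∑ i, c (x i) (y (i + 1)))) *
        ∏ i, D (x i, y (i + 1))

/-- Topological support of a measure. -/
def mSupport {Z : Type*} [TopologicalSpace Z] [MeasurableSpace Z] (π : Measure Z) : Set Z :=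
  {z | ∀ U : Set Z, IsOpen U → z ∈ U → 0 < π U}

/-- Weak convergence `π ε → π₀` as `ε → 0⁺`, tested against bounded continuous functions. -/
def TendstoWeakly {Z : Type*} [TopologicalSpace Z] [MeasurableSpace Z]
    (π : ℝ → Measure Z) (π₀ : Measure Z) : Prop :=
  ∀ f : BoundedContinuousFunction Z ℝ,
    Tendsto (fun ε => ∫ z, f z ∂(π ε)) (𝓝[>] (0 : ℝ)) (𝓝 (∫ z, f z ∂π₀))

/-- `c`-cyclical monotonicity of a set `Γ ⊆ X × Y`. -/
def CCyclMonotone (c : X → Y → ℝ) (Γ : Set (X × Y)) : Prop :=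
  ∀ (k : ℕ) (p : Fin (k + 1) → X × Y), (∀ i, p i ∈ Γ) →
    (∑ i, c (p i).1 (p i).2) ≤ ∑ i, c (p i).1 (p (i + 1)).2

/-- The rate function `I(x,y)`: supremum over `k ≥ 2`, points `(x_i,y_i)_{i=2}^k ⊆ Γ`
(the first point being `z`) and permutations `σ` of the cost difference. -/
def rateI (c : X → Y → ℝ) (Γ : Set (X × Y)) (z : X × Y) : EReal :=
  ⨆ (k : ℕ) (p : Fin (k + 2) → X × Y) (_ : p 0 = z) (_ : ∀ i, i ≠ 0 → p i ∈ Γ)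
    (σ : Equiv.Perm (Fin (k + 2))),
    (((∑ i, c (p i).1 (p i).2) - ∑ i, c (p i).1 (p (σ i)).2 : ℝ) : EReal)

/-- The variant of the rate function using only the cyclic shift. -/
def rateICyc (c : X → Y → ℝ) (Γ : Set (X × Y)) (z : X × Y) : EReal :=
  ⨆ (k : ℕ) (p : Fin (k + 2) → X × Y) (_ : p 0 = z) (_ : ∀ i, i ≠ 0 → p i ∈ Γ),
    (((∑ i, c (p i).1 (p i).2) - ∑ i, c (p i).1 (p (i + 1)).2 : ℝ) : EReal)

open scoped Classical in
/-- Relative entropy (Kullback–Leibler divergence) `H(π|R)`, valued in `EReal`. -/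
def relEntropy {Z : Type*} [MeasurableSpace Z] (π R : Measure Z) : EReal :=
  if π ≪ R ∧ Integrable (fun z => Real.log (π.rnDeriv R z).toReal) π
  then ((∫ z, Real.log (π.rnDeriv R z).toReal ∂π : ℝ) : EReal)
  else ⊤

/-- Transport cost `∫ c dπ` (as a lower integral). -/
def transportCost [MeasurableSpace X] [MeasurableSpace Y]
    (c : X → Y → ℝ) (π : Measure (X × Y)) : ℝ≥0∞ :=
  ∫⁻ z, ENNReal.ofReal (c z.1 z.2) ∂π

/-- Entropic optimal transport objective `∫ c dπ + ε H(π|μ⊗ν)`. -/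
def eotObj [MeasurableSpace X] [MeasurableSpace Y]
    (c : X → Y → ℝ) (ε : ℝ) (μ : Measure X) (ν : Measure Y) (π : Measure (X × Y)) : EReal :=
  (transportCost c π : EReal) + (ε : EReal) * relEntropy π (μ.prod ν)

/-- The `c`-conjugate `ψ^c(y) = inf_x [ψ(x) + c(x,y)]`. -/
def cConj (c : X → Y → ℝ) (ψ : X → EReal) (y : Y) : EReal :=
  ⨅ x, ψ x + (c x y : EReal)

/-- A proper `c`-convex function `ψ(x) = sup_y [ζ(y) − c(x,y)]`. -/
def IsCConvex (c : X → Y → ℝ) (ψ : X → EReal) : Prop :=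
  (∀ x, ψ x ≠ ⊥) ∧ (∃ x, ψ x ≠ ⊤) ∧
  ∃ ζ : Y → EReal, ∀ x, ψ x = ⨆ y, ζ y - (c x y : EReal)

/-- The `c`-subdifferential `∂_c ψ = {(x,y) : ψ^c(y) − ψ(x) = c(x,y)}`. -/
def cSubdiff (c : X → Y → ℝ) (ψ : X → EReal) : Set (X × Y) :=
  {p | cConj c ψ p.2 - ψ p.1 = (c p.1 p.2 : EReal)}

/-- A Kantorovich potential for `Γ`: a `c`-convex `ψ` with `Γ ⊆ ∂_c ψ`. -/
def IsKantorovichPotential (c : X → Y → ℝ) (Γ : Set (X × Y)) (ψ : X → EReal) : Prop :=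
  IsCConvex c ψ ∧ Γ ⊆ cSubdiff c ψ

/-- Uniqueness of Kantorovich potentials on a set `Λ ⊆ X`. -/
def UniquenessOfPotentials (c : X → Y → ℝ) (Γ : Set (X × Y)) (Λ : Set X) : Prop :=
  ∀ ψ₁ ψ₂ : X → EReal, IsKantorovichPotential c Γ ψ₁ → IsKantorovichPotential c Γ ψ₂ →
    ∀ x ∈ Λ, ∀ x' ∈ Λ, ψ₁ x - ψ₂ x = ψ₁ x' - ψ₂ x'

/-- The Rockafellar antiderivative `ψ_{(x₀,y₀)}` of `Γ`. -/
def rockafellar (c : X → Y → ℝ) (Γ : Set (X × Y)) (z₀ : X × Y) (x : X) : EReal :=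
  ⨆ (k : ℕ) (p : Fin (k + 1) → X × Y) (_ : ∀ i, p i ∈ Γ),
    ((c z₀.1 z₀.2 - c (p 0).1 z₀.2 +
        ∑ i : Fin (k + 1),
          (c (p i).1 (p i).2 -
            c (if h : (i : ℕ) + 1 < k + 1 then (p ⟨(i : ℕ) + 1, h⟩).1 else x) (p i).2) : ℝ) : EReal)

section Statement

variable {d : ℕ} {Y : Type*}
  [MeasurableSpace Y] [TopologicalSpace Y] [PolishSpace Y] [BorelSpace Y]

local notation "E" => EuclideanSpace ℝ (Fin d)

lemma mSupport_eq {Z : Type*} [TopologicalSpace Z] [MeasurableSpace Z] (π : Measure Z) :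
    mSupport π = π.support := by
  rw [Measure.support_eq_forall_isOpen]
  ext z
  simp only [mSupport, mem_ofPred_eq]
  exact ⟨fun h U hz hU => h U hU hz, fun h U hU hz => h U hz hU⟩

/-- A Lipschitz function on an open convex set with a.e. vanishing derivative is constant. -/
lemma const_of_ae_zero {f : E → ℝ} {U : Set E} (hU : IsOpen U) (hconv : Convex ℝ U)
    {L : NNReal} (hf : LipschitzOnWith L f U)
    (h0 : ∀ᵐ x : E, x ∈ U → HasFDerivAt f (0 : E →L[ℝ] ℝ) x) :
    ∀ x ∈ U, ∀ x' ∈ U, f x = f x' := by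
  intro x hx x' hx'
  obtain ⟨v, rfl⟩ : ∃ v, x' = x + v := ⟨x' - x, by simp⟩
  obtain ⟨N, hN, hNm, hN0⟩ := exists_measurable_superset_of_null (ae_iff.1 h0)
  have hgood : ∀ᵐ z : E, ∀ᵐ t : ℝ, z + t • v ∉ N := by
    have hm : MeasurableSet {p : E × ℝ | p.1 + p.2 • v ∉ N} := by
      have : Measurable fun p : E × ℝ => p.1 + p.2 • v := by fun_prop
      exact this hNm.compl
    rw [Measure.ae_ae_comm hm]
    refine Eventually.of_forall fun t => ?_
    have := measure_preimage_add_right (volume : Measure E) (t • v) N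
    rw [hN0] at this
    rw [ae_iff]
    simpa [preimage] using this
  have hdense := hgood.frequently
  have hcl : x ∈ closure {z : E | ∀ᵐ t : ℝ, z + t • v ∉ N} :=
    (Measure.dense_of_ae hgood) x
  have hconst : ∀ z ∈ {z : E | ∀ᵐ t : ℝ, z + t • v ∉ N}, z ∈ U → z + v ∈ U → f z = f (z + v) := by
    intro z hz hzU hzv
    have hseg : ∀ t ∈ Icc (0:ℝ) 1, z + t • v ∈ U := fun t ht =>
      hconv.add_smul_mem hzU hzv ht
    have hl : LipschitzOnWith (L * ‖v‖₊) (fun t : ℝ => f (z + t • v)) (uIcc 0 1) := by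
      rw [uIcc_of_le zero_le_one]
      refine LipschitzOnWith.of_dist_le_mul fun s hs t ht => ?_
      refine (hf.dist_le_mul _ (hseg s hs) _ (hseg t ht)).trans (le_of_eq ?_)
      rw [dist_add_left, dist_eq_norm, ← sub_smul, norm_smul, dist_eq_norm]
      push_cast
      ring
    obtain ⟨C, hC⟩ := hl.absolutelyContinuousOnInterval.const_of_ae_hasDerivAt_zero (by
      filter_upwards [hz] with t ht htI
      rw [uIcc_of_le zero_le_one] at htI
      have h1 : HasFDerivAt f (0 : E →L[ℝ] ℝ) (z + t • v) := by
        by_contra hcon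
        exact ht (hN (by simpa using ⟨hseg t htI, hcon⟩))
      have h2 : HasDerivAt (fun t : ℝ => z + t • v) ((1:ℝ) • v) t :=
        ((hasDerivAt_id t).smul_const v).const_add z
      have h3 := h1.comp_hasDerivAt t h2
      rw [ContinuousLinearMap.zero_apply] at h3
      exact h3)
    have a := hC 0 (by simp)
    have b := hC 1 (by simp)
    simp only [zero_smul, add_zero, one_smul] at a b
    rw [a, b]
  have hfx : ContinuousAt f x := hf.continuousOn.continuousAt (hU.mem_nhds hx)
  have hfv : ContinuousAt (fun z => f (z + v)) x :=
    ContinuousAt.comp (g := f) (f := fun z => z + v)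
      (hf.continuousOn.continuousAt (hU.mem_nhds hx')) (by fun_prop)
  rw [mem_closure_iff_frequently] at hcl
  have hUv : ∀ᶠ z in 𝓝 x, z ∈ U ∧ z + v ∈ U :=
    (show ∀ᶠ z in 𝓝 x, z ∈ U from hU.mem_nhds hx).and
      ((continuous_add_right v).continuousAt.eventually (hU.mem_nhds hx'))
  have hfr : ∃ᶠ z in 𝓝 x, f z - f (z + v) = 0 :=
    (hcl.and_eventually hUv).mono fun z hz => sub_eq_zero.2 (hconst z hz.1 hz.2.1 hz.2.2)
  have := (hfx.sub hfv).tendsto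
  have hmem := isClosed_singleton (x := (0:ℝ)).mem_of_frequently_of_tendsto hfr this
  exact sub_eq_zero.1 hmem

lemma ae_diff {f : E → ℝ}
    (hf : ∀ K : Set E, IsCompact K → ∃ L : NNReal, LipschitzOnWith L f K) :
    ∀ᵐ x : E, DifferentiableAt ℝ f x := by
  have : ∀ᵐ x : E, ∀ n : ℕ, x ∈ Metric.closedBall (0:E) n →
      DifferentiableWithinAt ℝ f (Metric.closedBall (0:E) n) x := by
    rw [ae_all_iff]
    intro n
    obtain ⟨L, hL⟩ := hf _ (isCompact_closedBall (0:E) n)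
    exact hL.ae_differentiableWithinAt_of_mem
  filter_upwards [this] with x hx
  obtain ⟨n, hn⟩ := exists_nat_gt ‖x‖
  have hn' : x ∈ Metric.ball (0:E) n := by simpa using hn
  exact (hx n (Metric.ball_subset_closedBall hn')).differentiableAt
    (mem_of_superset (Metric.isOpen_ball.mem_nhds hn') Metric.ball_subset_closedBall)

lemma potential_real {W : Type*} (c : E → W → ℝ)
    (hlip : ∀ K : Set E, IsCompact K → ∃ L : ℝ,
      ∀ x ∈ K, ∀ x' ∈ K, ∀ y, |c x y - c x' y| ≤ L * ‖x - x'‖)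
    (Γ : Set (E × W)) (ψ : E → EReal) (h : IsKantorovichPotential c Γ ψ) :
    ∃ φ : E → ℝ, (∀ x, ψ x = φ x) ∧
      (∀ K : Set E, IsCompact K → ∃ L : NNReal, LipschitzOnWith L φ K) ∧
      ∀ p ∈ Γ, ∀ x', φ p.1 + c p.1 p.2 ≤ φ x' + c x' p.2 := by
  obtain ⟨⟨hbot, ⟨x₀, hx₀⟩, ζ, hζ⟩, hsub⟩ := h
  have key : ∀ x x' : E, ∀ r : ℝ, (∀ y, |c x y - c x' y| ≤ r) → ψ x ≤ ψ x' + r := by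
    intro x x' r hr
    rw [hζ x]
    refine iSup_le fun y => ?_
    have h1 : ζ y - (c x' y : EReal) ≤ ψ x' := by
      rw [hζ x']; exact le_iSup (fun y => ζ y - (c x' y : EReal)) y
    refine le_trans ?_ (add_le_add_left h1 _)
    have h2 := abs_le.1 (hr y)
    induction ζ y with
    | bot => simp
    | top => simp
    | coe a =>
      norm_cast
      linarith
  have htop : ∀ x, ψ x ≠ ⊤ := by
    intro x hx
    obtain ⟨L, hL⟩ := hlip {x, x₀} (by simp)
    have := key x x₀ _ (hL x (by simp) x₀ (by simp))
    rw [hx, top_le_iff] at this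
    lift ψ x₀ to ℝ using ⟨hx₀, hbot x₀⟩ with a
    exact EReal.coe_ne_top _ (by exact_mod_cast this)
  have hφ : ∀ x, ψ x = ((ψ x).toReal : EReal) := fun x =>
    (EReal.coe_toReal (htop x) (hbot x)).symm
  refine ⟨fun x => (ψ x).toReal, hφ, ?_, ?_⟩
  · intro K hK
    obtain ⟨L, hL⟩ := hlip K hK
    have hone : ∀ x ∈ K, ∀ x' ∈ K, (ψ x).toReal ≤ (ψ x').toReal + L * ‖x - x'‖ := by
      intro x hx x' hx'
      have := key x x' _ (hL x hx x' hx')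
      rw [hφ x, hφ x'] at this
      exact_mod_cast this
    refine ⟨L.toNNReal, LipschitzOnWith.of_dist_le_mul fun x hx x' hx' => ?_⟩
    have h1 := hone x hx x' hx'
    have h2 := hone x' hx' x hx
    rw [norm_sub_rev] at h2
    have h3 : L * ‖x - x'‖ ≤ L.toNNReal * ‖x - x'‖ :=
      mul_le_mul_of_nonneg_right (Real.le_coe_toNNReal L) (norm_nonneg _)
    rw [dist_eq_norm, dist_eq_norm, Real.norm_eq_abs, abs_le]
    constructor <;> linarith
  · intro p hp x'
    have h1 : cConj c ψ p.2 - ψ p.1 = (c p.1 p.2 : EReal) := hsub hp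
    have h2 : cConj c ψ p.2 ≤ ψ x' + (c x' p.2 : EReal) :=
      iInf_le (fun x => ψ x + (c x p.2 : EReal)) x'
    rw [hφ p.1] at h1
    rw [hφ x'] at h2
    generalize cConj c ψ p.2 = a at h1 h2
    induction a with
    | bot => simp at h1
    | top => simp at h1
    | coe a =>
      norm_cast at h1 h2
      linarith

/-- uniqueness of Kantorovich potentials for Lipschitz costs. -/
theorem stmt19 (μ : Measure E) [IsProbabilityMeasure μ]
    (ν : Measure Y) [IsProbabilityMeasure ν]
    (hμ₁ : μ ≪ volume.restrict (mSupport μ)) (hμ₂ : volume.restrict (mSupport μ) ≪ μ)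
    (hbd : volume (frontier (mSupport μ)) = 0)
    (hconn : IsConnected (interior (mSupport μ)))
    (c : E → Y → ℝ) (hc : Continuous fun p : E × Y => c p.1 p.2) (hc0 : ∀ x y, 0 ≤ c x y)
    (hdiff : ∀ y, Differentiable ℝ fun x => c x y)
    (hlip : ∀ K : Set E, IsCompact K → ∃ L : ℝ,
      ∀ x ∈ K, ∀ x' ∈ K, ∀ y, |c x y - c x' y| ≤ L * ‖x - x'‖)
    (π : Measure (E × Y)) (hπ : IsCoupling μ ν π)
    (hfin : transportCost c π ≠ ⊤)
    (hopt : ∀ π', IsCoupling μ ν π' → transportCost c π ≤ transportCost c π') :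
    ∀ ψ₁ ψ₂ : E → EReal,
      IsKantorovichPotential c (mSupport π) ψ₁ → IsKantorovichPotential c (mSupport π) ψ₂ →
      ∀ x ∈ mSupport μ, ∀ x' ∈ mSupport μ, ψ₁ x - ψ₂ x = ψ₁ x' - ψ₂ x' := by
  classical
  intro ψ₁ ψ₂ hψ₁ hψ₂
  obtain ⟨φ₁, e₁, l₁, m₁⟩ := potential_real c hlip _ ψ₁ hψ₁
  obtain ⟨φ₂, e₂, l₂, m₂⟩ := potential_real c hlip _ ψ₂ hψ₂
  set S := mSupport μ with hS
  have hSc : IsClosed S := by rw [hS, mSupport_eq]; exact Measure.isClosed_support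
  -- almost every point of `S` is in the projection of the support of `π`
  have hproj : ∀ᵐ x ∂μ, ∃ y, (x, y) ∈ mSupport π := by
    let _ := TopologicalSpace.upgradeIsCompletelyMetrizable Y
    have h1 : ∀ᵐ p ∂π, p ∈ mSupport π := by
      rw [mSupport_eq]; exact Measure.support_mem_ae
    have := hπ.1
    rw [← hπ.2.1, ae_iff, ← nonpos_iff_eq_zero]
    have hcm : MeasurableSet (mSupport π) := by
      rw [mSupport_eq]; exact Measure.isClosed_support.measurableSet
    refine ENNReal.le_of_forall_pos_le_add fun ε hε _ => ?_
    obtain ⟨K, hKS, hK, hKlt⟩ := hcm.exists_isCompact_diff_lt (measure_ne_top π _)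
      (ENNReal.coe_pos.2 hε).ne'
    have hKm : MeasurableSet (Prod.fst '' K) := (hK.image continuous_fst).measurableSet
    calc (π.map Prod.fst) {x | ¬ ∃ y, (x, y) ∈ mSupport π}
        ≤ (π.map Prod.fst) (Prod.fst '' K)ᶜ := by
          refine measure_mono fun x hx hxK => ?_
          obtain ⟨p, hp, rfl⟩ := hxK
          exact hx ⟨p.2, hKS hp⟩
      _ = π (Prod.fst ⁻¹' (Prod.fst '' K)ᶜ) := Measure.map_apply measurable_fst hKm.compl
      _ ≤ π ((mSupport π)ᶜ ∪ (mSupport π \ K)) := by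
          refine measure_mono fun p hp => ?_
          by_cases hpS : p ∈ mSupport π
          · exact Or.inr ⟨hpS, fun hpK => hp ⟨p, hpK, rfl⟩⟩
          · exact Or.inl hpS
      _ ≤ π (mSupport π)ᶜ + π (mSupport π \ K) := measure_union_le _ _
      _ ≤ 0 + ε := add_le_add (le_of_eq h1) hKlt.le
  have hae : ∀ᵐ x : E, x ∈ interior S → HasFDerivAt (fun x => φ₁ x - φ₂ x) (0 : E →L[ℝ] ℝ) x := by
    have h1 : ∀ᵐ x : E, x ∈ S → ∃ y, (x, y) ∈ mSupport π :=
      (ae_restrict_iff' hSc.measurableSet).1 (hμ₂.ae_le hproj)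
    filter_upwards [h1, ae_diff l₁, ae_diff l₂] with x hx d₁ d₂ hxS
    obtain ⟨y, hy⟩ := hx (interior_subset hxS)
    have dc : DifferentiableAt ℝ (fun x => c x y) x := hdiff y x
    have z₁ : fderiv ℝ φ₁ x + fderiv ℝ (fun x => c x y) x = 0 :=
      IsLocalMin.hasFDerivAt_eq_zero (f := fun z => φ₁ z + c z y)
        (Eventually.of_forall fun z => m₁ (x, y) hy z) (d₁.hasFDerivAt.add dc.hasFDerivAt)
    have z₂ : fderiv ℝ φ₂ x + fderiv ℝ (fun x => c x y) x = 0 :=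
      IsLocalMin.hasFDerivAt_eq_zero (f := fun z => φ₂ z + c z y)
        (Eventually.of_forall fun z => m₂ (x, y) hy z) (d₂.hasFDerivAt.add dc.hasFDerivAt)
    have : fderiv ℝ φ₁ x - fderiv ℝ φ₂ x = 0 := by
      rw [← add_sub_add_right_eq_sub _ _ (fderiv ℝ (fun x => c x y) x), z₁, z₂, sub_zero]
    rw [← this]
    exact d₁.hasFDerivAt.sub d₂.hasFDerivAt
  -- `φ₁ - φ₂` is locally Lipschitz
  have hl : ∀ K : Set E, IsCompact K → ∃ L : NNReal,
      LipschitzOnWith L (fun x => φ₁ x - φ₂ x) K := by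
    intro K hK
    obtain ⟨L₁, h₁⟩ := l₁ K hK
    obtain ⟨L₂, h₂⟩ := l₂ K hK
    exact ⟨L₁ + L₂, h₁.sub h₂⟩
  have hcont : Continuous (fun x => φ₁ x - φ₂ x) := by
    rw [continuous_iff_continuousAt]
    intro x
    obtain ⟨L, hL⟩ := hl _ (isCompact_closedBall x 1)
    exact hL.continuousOn.continuousAt (Metric.closedBall_mem_nhds x one_pos)
  have hloc : ∀ x ∈ interior S, HasFDerivAt (fun x => φ₁ x - φ₂ x) (0 : E →L[ℝ] ℝ) x := by
    intro x hx
    obtain ⟨r, hr, hrS⟩ := Metric.isOpen_iff.1 isOpen_interior x hx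
    obtain ⟨L, hL⟩ := hl _ (isCompact_closedBall x r)
    have hk := const_of_ae_zero Metric.isOpen_ball (convex_ball x r)
      (hL.mono Metric.ball_subset_closedBall) (hae.mono fun z hz hzb => hz (hrS hzb))
    refine (hasFDerivAt_const (φ₁ x - φ₂ x) x).congr_of_eventuallyEq ?_
    filter_upwards [Metric.ball_mem_nhds x hr] with z hz
    exact hk z hz x (Metric.mem_ball_self hr)
  obtain ⟨a, ha⟩ := isOpen_interior.exists_is_const_of_fderiv_eq_zero hconn.isPreconnected
    (fun x hx => (hloc x hx).differentiableAt.differentiableWithinAt)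
    (fun x hx => (hloc x hx).fderiv)
  have hcl : S ⊆ closure (interior S) := by
    intro x hx
    rw [mem_closure_iff]
    intro U hU hxU
    by_contra hne
    rw [not_nonempty_iff_eq_empty] at hne
    have hsub : U ∩ S ⊆ frontier S := by
      rintro z ⟨hzU, hzS⟩
      refine ⟨subset_closure hzS, fun hzi => ?_⟩
      have : z ∈ U ∩ interior S := ⟨hzU, hzi⟩
      rw [hne] at this
      exact this
    have h0 : volume.restrict S U = 0 := by
      rw [Measure.restrict_apply hU.measurableSet]
      exact measure_mono_null hsub hbd
    exact (hx U hU hxU).ne' (hμ₁ h0)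
  have hfin' : ∀ x ∈ S, φ₁ x - φ₂ x = a := by
    intro x hx
    have : closure (interior S) ⊆ {x | φ₁ x - φ₂ x = a} :=
      closure_minimal ha (isClosed_eq hcont continuous_const)
    exact this (hcl hx)
  intro x hx x' hx'
  rw [e₁, e₂, e₁, e₂, ← EReal.coe_sub, ← EReal.coe_sub, hfin' x hx, hfin' x' hx']

end Statement

end EOT
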